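/- arXiv:1307.5383 — 9 statements merged into one kernel-verified Lean document; each statement's English description precedes it below -/
import Mathlib

section
/- For all 2 ≤ k ≤ n, (σ_{k−1}⁻¹⋯σ₂⁻¹σ₁⁻¹) · Q_k^{k−1} = Q_{k−1}^{k−1}; equivalently, P_k⁻¹ · Q_k^{k−1} = Q_{k−1}^{k−1}. -/
/-- `Qb σ k = σ_{k-1} σ_{k-2} ⋯ σ₁` (with `Qb σ 1 = 1`). -/
def Qb {G : Type*} [Group G] (σ : ℕ → G) : ℕ → G
  | 0 => 1
  | 1 => 1
  | (k+2) => σ (k+1) * Qb σ (k+1)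

/-- `Pb σ k = σ₁ σ₂ ⋯ σ_{k-1}` (with `Pb σ 1 = 1`). -/
def Pb {G : Type*} [Group G] (σ : ℕ → G) : ℕ → G
  | 0 => 1
  | 1 => 1
  | (k+2) => Pb σ (k+1) * σ (k+1)

/-- The torsion `Tb σ k = (σ₁)(σ₂σ₁)⋯(σ_{k-1}⋯σ₁) = Q₁ Q₂ ⋯ Q_k` (with `Tb σ 1 = 1`). -/
def Tb {G : Type*} [Group G] (σ : ℕ → G) : ℕ → G
  | 0 => 1
  | (k+1) => Tb σ k * Qb σ (k+1)

/-!
Conjugation by `Q_k` lowers indices: `Q_k σᵢ₊₁ = σᵢ Q_k`, and hence `Q_k ^ j σᵢ₊ⱼ = σᵢ Q_k ^ j`.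
Since `Q_k = σ_{k-1} Q_{k-1}`, moving `σ_{k-1}` to the left through `Q_k ^ j` extracts the letter
`σ_{k-1-j}`, which turns `P_{k-1-j}` into `P_{k-j}`. After `k - 1` such moves `Q_k ^ (k - 1)` has
become `P_k Q_{k-1} ^ (k - 1)`.
-/

/-- The defining relations of the braid group on `n` strands, for the elements `σ 1, …, σ (n - 1)`.
The values of `σ` at other indices are unconstrained. -/
structure BraidRelations {M : Type*} [Mul M] (σ : ℕ → M) (n : ℕ) : Prop where
  commute : ∀ i j, 1 ≤ i → i + 1 < j → j + 1 ≤ n → Commute (σ i) (σ j)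
  braid : ∀ i, 1 ≤ i → i + 2 ≤ n → σ i * σ (i + 1) * σ i = σ (i + 1) * σ i * σ (i + 1)

theorem BraidRelations.mono {M : Type*} [Mul M] {σ : ℕ → M} {m n : ℕ}
    (h : BraidRelations σ n) (hmn : m ≤ n) : BraidRelations σ m where
  commute i j hi hij hj := h.commute i j hi hij (hj.trans hmn)
  braid i hi him := h.braid i hi (him.trans hmn)

section

variable {G : Type*} [Group G] {σ : ℕ → G} {k : ℕ}

theorem Qb_succ (σ : ℕ → G) (hk : 1 ≤ k) : Qb σ (k + 1) = σ k * Qb σ k := by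
  obtain ⟨m, rfl⟩ := Nat.exists_eq_add_of_le' hk
  rfl

theorem Pb_succ (σ : ℕ → G) (hk : 1 ≤ k) : Pb σ (k + 1) = Pb σ k * σ k := by
  obtain ⟨m, rfl⟩ := Nat.exists_eq_add_of_le' hk
  rfl

theorem commute_Qb {g : G} (h : ∀ i, 1 ≤ i → i < k → Commute (σ i) g) : Commute (Qb σ k) g := by
  induction k with
  | zero => exact Commute.one_left g
  | succ k ih =>
    rcases k.eq_zero_or_pos with rfl | hk
    · exact Commute.one_left g
    · rw [Qb_succ σ hk]
      exact (h k hk k.lt_succ_self).mul_left (ih fun i hi hik => h i hi (hik.trans k.lt_succ_self))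

namespace BraidRelations

theorem semiconjBy_Qb (h : BraidRelations σ k) {i : ℕ} (hi : 1 ≤ i) (hik : i + 1 < k) :
    SemiconjBy (Qb σ k) (σ (i + 1)) (σ i) := by
  induction k with
  | zero => omega
  | succ k ih =>
    rw [Qb_succ σ (by omega)]
    rcases Nat.lt_succ_iff_lt_or_eq.mp hik with hlt | rfl
    · have hcomm : SemiconjBy (σ k) (σ i) (σ i) := (h.commute i k hi hlt le_rfl).symm
      exact hcomm.mul_left (ih (h.mono k.le_succ) hlt)
    · have hbraid : SemiconjBy (σ (i + 1) * σ i) (σ (i + 1)) (σ i) := by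
        rw [SemiconjBy, ← h.braid i hi le_rfl, mul_assoc]
      have hcomm : Commute (Qb σ i) (σ (i + 1)) :=
        commute_Qb fun j hj hji => h.commute j (i + 1) hj (by omega) le_rfl
      rw [Qb_succ σ hi, ← mul_assoc]
      exact hbraid.mul_left hcomm

theorem semiconjBy_Qb_pow (h : BraidRelations σ k) {i : ℕ} (hi : 1 ≤ i) (j : ℕ) (hij : i + j < k) :
    SemiconjBy (Qb σ k ^ j) (σ (i + j)) (σ i) := by
  induction j with
  | zero => simp
  | succ j ih =>
    rw [pow_succ]
    exact (ih (by omega)).mul_left (h.semiconjBy_Qb (hi.trans (Nat.le_add_right i j)) hij)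

theorem Pb_mul_Qb_pow (h : BraidRelations σ (k + 1)) {i j : ℕ} (hi : 1 ≤ i) (hij : i + j = k + 1) :
    Pb σ i * Qb σ (k + 1) ^ j = Pb σ (k + 1) * Qb σ k ^ j := by
  induction j generalizing i with
  | zero =>
    obtain rfl : i = k + 1 := hij
    simp
  | succ j ih =>
    obtain rfl : k = i + j := by omega
    calc Pb σ i * Qb σ (i + j + 1) ^ (j + 1)
        = Pb σ i * (Qb σ (i + j + 1) ^ j * σ (i + j)) * Qb σ (i + j) := by
          rw [pow_succ]
          nth_rw 2 [Qb_succ σ (by omega)]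
          simp only [mul_assoc]
      _ = Pb σ i * (σ i * Qb σ (i + j + 1) ^ j) * Qb σ (i + j) := by
          rw [(h.semiconjBy_Qb_pow hi j (by omega)).eq]
      _ = Pb σ (i + 1) * Qb σ (i + j + 1) ^ j * Qb σ (i + j) := by
          rw [Pb_succ σ hi, mul_assoc (Pb σ i) (σ i)]
      _ = Pb σ (i + j + 1) * Qb σ (i + j) ^ (j + 1) := by
          rw [ih (by omega) (by omega), mul_assoc, pow_succ]

end BraidRelations

end

/-- For `2 ≤ k ≤ n`, `(σ_{k−1}⁻¹⋯σ₂⁻¹σ₁⁻¹) · Q_k^(k−1) = Q_{k−1}^(k−1)`,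
i.e. `P_k⁻¹ · Q_k^(k−1) = Q_{k−1}^(k−1)`. -/
theorem P_inv_mul_Q_pow {G : Type*} [Group G] (n : ℕ) (hn : 1 ≤ n)
    (σ : ℕ → G)
    (hcomm : ∀ i j : ℕ, 1 ≤ i → i + 1 < j → j + 1 ≤ n → σ i * σ j = σ j * σ i)
    (hbraid : ∀ i : ℕ, 1 ≤ i → i + 2 ≤ n →
      σ i * σ (i + 1) * σ i = σ (i + 1) * σ i * σ (i + 1))
    (k : ℕ) (hk2 : 2 ≤ k) (hk : k ≤ n) :
    (Pb σ k)⁻¹ * (Qb σ k) ^ (k - 1) = (Qb σ (k - 1)) ^ (k - 1) := by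
  obtain ⟨m, rfl⟩ := Nat.exists_eq_add_of_le' (one_le_two.trans hk2)
  have hσ : BraidRelations σ (m + 1) := BraidRelations.mono ⟨hcomm, hbraid⟩ hk
  have key : Qb σ (m + 1) ^ m = Pb σ (m + 1) * Qb σ m ^ m := by
    simpa [Pb] using hσ.Pb_mul_Qb_pow le_rfl (Nat.add_comm 1 m)
  rw [Nat.add_sub_cancel, key, inv_mul_cancel_left]
end

section
/- For all 1 ≤ i < k ≤ n − 1, the element σᵢ commutes with the product (σ_k σ_{k−1}⋯σ₁)(σ₁σ₂⋯σ_k); equivalently, σᵢ · Q_{k+1}P_{k+1} = Q_{k+1}P_{k+1} · σᵢ. -/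
/-!
Write `σ₁ ⋯ σ_k = A (σᵢ σᵢ₊₁) B` with `A = σ₁ ⋯ σᵢ₋₁` and `B = σᵢ₊₂ ⋯ σ_k`. The braid relation
says `(σᵢ σᵢ₊₁) σᵢ = σᵢ₊₁ (σᵢ σᵢ₊₁)`, while `B` commutes with `σᵢ` and `A` with `σᵢ₊₁`. Hence moving
`σᵢ` leftwards through the whole product turns it into `σᵢ₊₁`; as the braid relation is symmetric,
moving `σᵢ₊₁` leftwards through the reversed product turns it back into `σᵢ`.
-/

section Monoid

variable {M : Type*} [Monoid M] {a b : M} {L R : List M}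

theorem semiconjBy_of_braid (hab : a * b * a = b * a * b) : SemiconjBy (a * b) a b :=
  hab.trans (mul_assoc b a b)

theorem semiconjBy_prod_of_braid (hab : a * b * a = b * a * b)
    (hL : ∀ x ∈ L, Commute b x) (hR : ∀ x ∈ R, Commute a x) :
    SemiconjBy (L ++ a :: b :: R).prod a b := by
  have hLb : SemiconjBy L.prod b b := (Commute.list_prod_right L b hL).symm
  have hRa : SemiconjBy R.prod a a := (Commute.list_prod_right R a hR).symm
  have hprod : (L ++ a :: b :: R).prod = L.prod * (a * b * R.prod) := by
    simp only [List.prod_append, List.prod_cons, mul_assoc]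
  rw [hprod]
  exact hLb.mul_left ((semiconjBy_of_braid hab).mul_left hRa)

theorem semiconjBy_reverse_prod_of_braid (hab : a * b * a = b * a * b)
    (hL : ∀ x ∈ L, Commute b x) (hR : ∀ x ∈ R, Commute a x) :
    SemiconjBy (L ++ a :: b :: R).reverse.prod b a := by
  have hreverse : (L ++ a :: b :: R).reverse = R.reverse ++ b :: a :: L.reverse := by
    simp only [List.reverse_append, List.reverse_cons, List.append_assoc, List.cons_append,
      List.nil_append]
  rw [hreverse]
  exact semiconjBy_prod_of_braid hab.symm (fun x hx ↦ hR x (List.mem_reverse.mp hx))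
    (fun x hx ↦ hL x (List.mem_reverse.mp hx))

theorem commute_reverse_prod_mul_prod_of_braid (hab : a * b * a = b * a * b)
    (hL : ∀ x ∈ L, Commute b x) (hR : ∀ x ∈ R, Commute a x) :
    Commute a ((L ++ a :: b :: R).reverse.prod * (L ++ a :: b :: R).prod) :=
  ((semiconjBy_reverse_prod_of_braid hab hL hR).mul_left
    (semiconjBy_prod_of_braid hab hL hR)).symm

end Monoid

theorem range'_one_eq_append_cons_cons {i k : ℕ} (hi : 1 ≤ i) (hik : i < k) :
    List.range' 1 k =
      List.range' 1 (i - 1) ++ i :: (i + 1) :: List.range' (i + 2) (k - (i + 1)) := by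
  obtain ⟨j, rfl⟩ := Nat.exists_eq_add_of_le' hi
  obtain ⟨m, rfl⟩ := Nat.exists_eq_add_of_le hik
  have hlength : (j + 1).succ + m = j + (m + 2) := by omega
  rw [hlength, ← List.range'_append_1, List.range'_succ, List.range'_succ, Nat.add_comm 1 j]
  congr 4
  omega

theorem sigma_commutes_QP_general {M : Type*} [Monoid M] {σ : ℕ → M} {i k : ℕ}
    (hi : 1 ≤ i) (hik : i < k) (hbraid : σ i * σ (i + 1) * σ i = σ (i + 1) * σ i * σ (i + 1))
    (hlow : ∀ j, 1 ≤ j → j < i → Commute (σ (i + 1)) (σ j))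
    (hhigh : ∀ j, i + 1 < j → j ≤ k → Commute (σ i) (σ j)) :
    Commute (σ i) (((List.range' 1 k).map σ).reverse.prod * ((List.range' 1 k).map σ).prod) := by
  rw [range'_one_eq_append_cons_cons hi hik, List.map_append, List.map_cons, List.map_cons]
  refine commute_reverse_prod_mul_prod_of_braid hbraid
    (List.forall_mem_map.mpr fun j hj ↦ ?_) (List.forall_mem_map.mpr fun j hj ↦ ?_)
  · rw [List.mem_range'_1] at hj
    exact hlow j hj.1 (by omega)
  · rw [List.mem_range'_1] at hj
    exact hhigh j hj.1 (by omega)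

section Group

variable {G : Type*} [Group G] (σ : ℕ → G) (k : ℕ)

theorem Pb_succ_eq_prod : Pb σ (k + 1) = ((List.range' 1 k).map σ).prod := by
  induction k with
  | zero => rfl
  | succ k ih =>
    rw [Pb, ih, List.range'_1_concat, List.map_append, List.prod_append, List.map_singleton,
      List.prod_singleton, Nat.add_comm 1 k]

theorem Qb_succ_eq_reverse_prod : Qb σ (k + 1) = ((List.range' 1 k).map σ).reverse.prod := by
  induction k with
  | zero => rfl
  | succ k ih =>
    rw [Qb, ih, List.range'_1_concat, List.map_append, List.reverse_append, List.prod_append,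
      List.map_singleton, List.reverse_singleton, List.prod_singleton, Nat.add_comm 1 k]

end Group

/-- For `1 ≤ i < k ≤ n − 1`, the element `σᵢ` commutes with
`(σ_k σ_{k−1}⋯σ₁)(σ₁σ₂⋯σ_k) = Q_{k+1} P_{k+1}`. -/
theorem sigma_commutes_QP {G : Type*} [Group G] (n : ℕ) (hn : 1 ≤ n)
    (σ : ℕ → G)
    (hcomm : ∀ i j : ℕ, 1 ≤ i → i + 1 < j → j + 1 ≤ n → σ i * σ j = σ j * σ i)
    (hbraid : ∀ i : ℕ, 1 ≤ i → i + 2 ≤ n →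
      σ i * σ (i + 1) * σ i = σ (i + 1) * σ i * σ (i + 1))
    (i k : ℕ) (hi : 1 ≤ i) (hik : i < k) (hk : k + 1 ≤ n) :
    σ i * (Qb σ (k + 1) * Pb σ (k + 1)) = (Qb σ (k + 1) * Pb σ (k + 1)) * σ i := by
  rw [Qb_succ_eq_reverse_prod, Pb_succ_eq_prod]
  exact sigma_commutes_QP_general hi hik (hbraid i hi (by omega))
    (fun j hj hji ↦ (hcomm j (i + 1) hj (by omega) (by omega)).symm)
    (fun j hij hjk ↦ hcomm i j hi hij (by omega))
end

section
/- For all 1 ≤ k ≤ n, the square of the torsion equals the k-th power of Q_k: T_k · T_k = Q_k^k. -/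
/-!
Conjugation by `Q_{m+1}` lowers the index of each of `σ₂, …, σ_m` by one, that is
`Q_{m+1} σ_{i+1} = σ_i Q_{m+1}`. Hence in `Q_{m+1}^j = (σ_m Q_m)^j` the factors `σ_m` can be moved
to the left, where they become `σ_{m-j+1} ⋯ σ_m`. For `j = m` this reads
`Q_{m+1}^m = P_{m+1} Q_m^m`. Moreover `T_{m+1} = T_m Q_{m+1} = P_{m+1} T_m`, whence by induction
`T_{m+1}² = P_{m+1} T_m² Q_{m+1} = P_{m+1} Q_m^m Q_{m+1} = Q_{m+1}^{m+1}`.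
-/

section Monoid

variable {M : Type*} [Monoid M]

/-- The relations of the standard generators `s 0, …, s (n - 1)` of the braid group on `n + 1`
strands. Generators are numbered from `0`, and the values of `s` from `n` on are irrelevant. -/
structure BraidRelations_s5 (n : ℕ) (s : ℕ → M) : Prop where
  commute : ∀ i j, i + 1 < j → j < n → Commute (s i) (s j)
  braid : ∀ i, i + 1 < n → s i * s (i + 1) * s i = s (i + 1) * s i * s (i + 1)

/-- The descending product `s (m - 1) ⋯ s 1 * s 0`, which is the `Q_{m+1}` of the paper because
generators are numbered from `0`. -/
def descProd (s : ℕ → M) : ℕ → M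
  | 0 => 1
  | m + 1 => s m * descProd s m

/-- The ascending product `s 0 * s 1 ⋯ s (m - 1)`, which is the `P_{m+1}` of the paper because
generators are numbered from `0`. -/
def ascProd (s : ℕ → M) : ℕ → M
  | 0 => 1
  | m + 1 => ascProd s m * s m

/-- The torsion (half twist) on `m + 1` strands, which is the `T_{m+1}` of the paper. -/
def braidTorsion (s : ℕ → M) : ℕ → M
  | 0 => 1
  | m + 1 => braidTorsion s m * descProd s (m + 1)

namespace BraidRelations_s5

variable {n m : ℕ} {s : ℕ → M}

theorem commute_descProd (h : BraidRelations_s5 n s) {j : ℕ} (hmj : m < j) (hj : j < n) :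
    Commute (descProd s m) (s j) := by
  induction m with
  | zero => exact Commute.one_left _
  | succ m ih => exact (h.commute m j hmj hj).mul_left (ih (by lia))

theorem commute_braidTorsion (h : BraidRelations_s5 n s) {j : ℕ} (hmj : m < j) (hj : j < n) :
    Commute (braidTorsion s m) (s j) := by
  induction m with
  | zero => exact Commute.one_left _
  | succ m ih => exact (ih (by lia)).mul_left (h.commute_descProd hmj hj)

theorem semiconjBy_descProd (h : BraidRelations_s5 n s) {i : ℕ} (hi : i + 1 < m) (hm : m ≤ n) :
    SemiconjBy (descProd s m) (s (i + 1)) (s i) := by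
  induction m, Nat.succ_le_of_lt hi using Nat.le_induction with
  | base =>
    have braid : SemiconjBy (s (i + 1) * s i) (s (i + 1)) (s i) := by
      rw [SemiconjBy, ← h.braid i hm, mul_assoc]
    have split : descProd s (i + 2) = s (i + 1) * s i * descProd s i := (mul_assoc _ _ _).symm
    rw [split]
    exact braid.mul_left (h.commute_descProd i.lt_succ_self hm)
  | succ m him ih =>
    exact SemiconjBy.mul_left (h.commute i m him hm).symm (ih him (by lia))

theorem semiconjBy_descProd_pow (h : BraidRelations_s5 n s) {i j : ℕ} (hij : i + j < m)
    (hm : m ≤ n) : SemiconjBy (descProd s m ^ j) (s (i + j)) (s i) := by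
  induction j with
  | zero => simp
  | succ j ih =>
    rw [pow_succ]
    exact (ih (by lia)).mul_left (h.semiconjBy_descProd hij hm)

theorem ascProd_mul_descProd_succ_pow (h : BraidRelations_s5 n s) (hm : m < n) {i j : ℕ}
    (hij : i + j = m + 1) :
    ascProd s i * descProd s (m + 1) ^ j = ascProd s (m + 1) * descProd s m ^ j := by
  induction j generalizing i with
  | zero => simp [← hij]
  | succ j ih =>
    obtain rfl : i + j = m := by lia
    have shift : descProd s (i + j + 1) ^ j * s (i + j) = s i * descProd s (i + j + 1) ^ j :=
      h.semiconjBy_descProd_pow (i + j).lt_succ_self hm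
    calc ascProd s i * descProd s (i + j + 1) ^ (j + 1)
        = ascProd s i * (descProd s (i + j + 1) ^ j * s (i + j)) * descProd s (i + j) := by
          simp only [pow_succ, descProd, mul_assoc]
      _ = ascProd s (i + 1) * descProd s (i + j + 1) ^ j * descProd s (i + j) := by
          simp only [shift, ascProd, mul_assoc]
      _ = ascProd s (i + j + 1) * descProd s (i + j) ^ (j + 1) := by
          rw [ih (by lia), pow_succ, mul_assoc]

theorem descProd_succ_pow_succ (h : BraidRelations_s5 n s) (hm : m < n) :
    descProd s (m + 1) ^ (m + 1) = ascProd s (m + 1) * descProd s m ^ (m + 1) := by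
  simpa only [ascProd, one_mul] using h.ascProd_mul_descProd_succ_pow hm (zero_add (m + 1))

theorem braidTorsion_succ_eq_ascProd_mul (h : BraidRelations_s5 n s) (hm : m < n) :
    braidTorsion s (m + 1) = ascProd s (m + 1) * braidTorsion s m := by
  induction m with
  | zero => simp only [braidTorsion, ascProd, descProd, one_mul, mul_one]
  | succ m ih =>
    have comm : braidTorsion s m * s (m + 1) = s (m + 1) * braidTorsion s m :=
      h.commute_braidTorsion m.lt_succ_self hm
    calc braidTorsion s (m + 2)
        = braidTorsion s (m + 1) * (s (m + 1) * descProd s (m + 1)) := rfl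
      _ = ascProd s (m + 1) * (braidTorsion s m * s (m + 1)) * descProd s (m + 1) := by
          simp only [ih (by lia), mul_assoc]
      _ = ascProd s (m + 1) * s (m + 1) * (braidTorsion s m * descProd s (m + 1)) := by
          simp only [comm, mul_assoc]
      _ = ascProd s (m + 2) * braidTorsion s (m + 1) := rfl

end BraidRelations_s5

theorem torsion_sq_eq_Q_pow_general {n m : ℕ} {s : ℕ → M} (h : BraidRelations_s5 n s)
    (hm : m ≤ n) : braidTorsion s m * braidTorsion s m = descProd s m ^ (m + 1) := by
  induction m with
  | zero => simp only [braidTorsion, descProd, one_mul, one_pow]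
  | succ m ih =>
    calc braidTorsion s (m + 1) * braidTorsion s (m + 1)
        = ascProd s (m + 1) * braidTorsion s m * (braidTorsion s m * descProd s (m + 1)) :=
          congrArg (· * _) (h.braidTorsion_succ_eq_ascProd_mul hm)
      _ = ascProd s (m + 1) * (braidTorsion s m * braidTorsion s m) * descProd s (m + 1) := by
          simp only [mul_assoc]
      _ = ascProd s (m + 1) * descProd s m ^ (m + 1) * descProd s (m + 1) := by
          rw [ih (by lia)]
      _ = descProd s (m + 1) ^ (m + 2) := by
          rw [← h.descProd_succ_pow_succ hm, ← pow_succ]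

end Monoid

section Group

variable {G : Type*} [Group G] (σ : ℕ → G) (m : ℕ)

theorem Qb_succ_eq_descProd : Qb σ (m + 1) = descProd (fun i ↦ σ (i + 1)) m := by
  induction m with
  | zero => rfl
  | succ m ih => rw [Qb, ih, descProd]

theorem Tb_succ_eq_braidTorsion : Tb σ (m + 1) = braidTorsion (fun i ↦ σ (i + 1)) m := by
  induction m with
  | zero => exact one_mul _
  | succ m ih => rw [Tb, ih, Qb_succ_eq_descProd, braidTorsion]

end Group

/-- For `1 ≤ k ≤ n`, the square of the torsion equals `Q_k^k`. -/
theorem torsion_sq_eq_Q_pow {G : Type*} [Group G] (n : ℕ) (hn : 1 ≤ n)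
    (σ : ℕ → G)
    (hcomm : ∀ i j : ℕ, 1 ≤ i → i + 1 < j → j + 1 ≤ n → σ i * σ j = σ j * σ i)
    (hbraid : ∀ i : ℕ, 1 ≤ i → i + 2 ≤ n →
      σ i * σ (i + 1) * σ i = σ (i + 1) * σ i * σ (i + 1))
    (k : ℕ) (hk1 : 1 ≤ k) (hk : k ≤ n) :
    Tb σ k * Tb σ k = (Qb σ k) ^ k := by
  obtain ⟨n, rfl⟩ := Nat.exists_eq_add_of_le' hn
  obtain ⟨m, rfl⟩ := Nat.exists_eq_add_of_le' hk1
  have relations : BraidRelations_s5 n fun i ↦ σ (i + 1) :=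
    { commute := fun i j hij hj ↦ hcomm (i + 1) (j + 1) (by lia) (by lia) (by lia)
      braid := fun i hi ↦ hbraid (i + 1) (by lia) (by lia) }
  rw [Tb_succ_eq_braidTorsion, Qb_succ_eq_descProd]
  exact torsion_sq_eq_Q_pow_general relations (by lia)
end

section
/- For all 1 ≤ k ≤ n, the square of the torsion equals the k-th power of P_k: T_k · T_k = P_k^k. -/
/-!
Conjugation by `P_k` shifts the generators: `P_k σᵢ = σᵢ₊₁ P_k`. Multiplying
`P_{k+1} = P_k σ_k` by itself and moving each new factor `P_{k+1}` to the left of the generators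
collected so far gives `P_{k+1}^j = P_k^j (σ_k σ_{k-1} ⋯ σ_{k-j+1})`, hence
`P_{k+1}^k = P_k^k Q_{k+1}`. On the other hand `T_{k+1} = T_k Q_{k+1} = P_{k+1} T_k`, so
`T_{k+1}² = P_{k+1} T_k² Q_{k+1}`, which by induction is
`P_{k+1} P_k^k Q_{k+1} = P_{k+1}^{k+1}`.
-/

/-- The commutation relations `σᵢσⱼ = σⱼσᵢ` (`i + 1 < j`) of the braid group on `n` strands; only
the entries `σ 1, …, σ (n - 1)` of the sequence are constrained. -/
def FarCommute {G : Type*} [Group G] (σ : ℕ → G) (n : ℕ) : Prop :=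
  ∀ i j : ℕ, 1 ≤ i → i + 1 < j → j < n → Commute (σ i) (σ j)

/-- The defining relations of the braid group on `n` strands, for `σ 1, …, σ (n - 1)`. -/
structure BraidRelations_s6 {G : Type*} [Group G] (σ : ℕ → G) (n : ℕ) : Prop where
  farCommute : FarCommute σ n
  braid : ∀ i : ℕ, 1 ≤ i → i + 1 < n →
    σ i * σ (i + 1) * σ i = σ (i + 1) * σ i * σ (i + 1)

section Semiconj

variable {G : Type*} [Group G] {a : G} {σ τ : ℕ → G} {k : ℕ}

theorem semiconjBy_Qb (h : ∀ i, 1 ≤ i → i < k → SemiconjBy a (σ i) (τ i)) :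
    SemiconjBy a (Qb σ k) (Qb τ k) := by
  induction k with
  | zero => exact SemiconjBy.one_right a
  | succ k ih =>
    cases k with
    | zero => exact SemiconjBy.one_right a
    | succ k =>
      exact (h (k + 1) k.succ_pos k.succ.lt_succ_self).mul_right
        (ih fun i hi hik => h i hi (Nat.lt_succ_of_lt hik))

theorem semiconjBy_Pb (h : ∀ i, 1 ≤ i → i < k → SemiconjBy a (σ i) (τ i)) :
    SemiconjBy a (Pb σ k) (Pb τ k) := by
  induction k with
  | zero => exact SemiconjBy.one_right a
  | succ k ih =>
    cases k with
    | zero => exact SemiconjBy.one_right a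
    | succ k =>
      exact (ih fun i hi hik => h i hi (Nat.lt_succ_of_lt hik)).mul_right
        (h (k + 1) k.succ_pos k.succ.lt_succ_self)

theorem semiconjBy_Tb (h : ∀ i, 1 ≤ i → i < k → SemiconjBy a (σ i) (τ i)) :
    SemiconjBy a (Tb σ k) (Tb τ k) := by
  induction k with
  | zero => exact SemiconjBy.one_right a
  | succ k ih =>
    exact (ih fun i hi hik => h i hi (Nat.lt_succ_of_lt hik)).mul_right (semiconjBy_Qb h)

end Semiconj

section Braid

variable {G : Type*} [Group G] {σ : ℕ → G} {n : ℕ}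

theorem FarCommute.commute_Pb (h : FarCommute σ n) {j k : ℕ} (hkj : k < j) (hj : j < n) :
    Commute (σ j) (Pb σ k) :=
  semiconjBy_Pb fun i hi hik => (h i j hi (by lia) hj).symm

theorem FarCommute.commute_Tb (h : FarCommute σ n) {j k : ℕ} (hkj : k < j) (hj : j < n) :
    Commute (σ j) (Tb σ k) :=
  semiconjBy_Tb fun i hi hik => (h i j hi (by lia) hj).symm

theorem FarCommute.Tb_succ_eq_Pb_mul_Tb (h : FarCommute σ n) {k : ℕ} (hk : k < n) :
    Tb σ (k + 1) = Pb σ (k + 1) * Tb σ k := by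
  induction k with
  | zero => simp only [Tb, Pb, Qb]
  | succ k ih =>
    have hcomm : σ (k + 1) * Tb σ k = Tb σ k * σ (k + 1) := h.commute_Tb k.lt_succ_self hk
    calc Tb σ (k + 2) = Tb σ (k + 1) * (σ (k + 1) * Qb σ (k + 1)) := rfl
      _ = Pb σ (k + 1) * (Tb σ k * σ (k + 1)) * Qb σ (k + 1) := by
        rw [ih (Nat.lt_of_succ_lt hk)]
        simp only [mul_assoc]
      _ = Pb σ (k + 1) * σ (k + 1) * (Tb σ k * Qb σ (k + 1)) := by
        rw [← hcomm]
        simp only [mul_assoc]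
      _ = Pb σ (k + 2) * Tb σ (k + 1) := rfl

theorem BraidRelations_s6.semiconjBy_Pb_shift (h : BraidRelations_s6 σ n) {i k : ℕ} (hi : 1 ≤ i)
    (hik : i + 2 ≤ k) (hk : k ≤ n) : SemiconjBy (Pb σ k) (σ i) (σ (i + 1)) := by
  induction k, hik using Nat.le_induction with
  | base =>
    obtain ⟨i, rfl⟩ := Nat.exists_eq_add_of_le' hi
    have hPb : Pb σ (i + 3) = Pb σ (i + 1) * (σ (i + 1) * σ (i + 2)) := mul_assoc _ _ _
    have hbraid : SemiconjBy (σ (i + 1) * σ (i + 2)) (σ (i + 1)) (σ (i + 2)) :=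
      (h.braid (i + 1) hi hk).trans (mul_assoc _ _ _)
    rw [hPb]
    exact SemiconjBy.mul_left (h.farCommute.commute_Pb (i + 1).lt_succ_self hk).symm hbraid
  | succ k hik ih =>
    obtain ⟨k, rfl⟩ := Nat.exists_eq_add_of_le' (le_of_add_le_right hik : 2 ≤ k)
    exact (ih (Nat.le_of_succ_le hk)).mul_left
      (h.farCommute i (k + 2) hi (Nat.lt_of_succ_le hik) hk).symm

/-- The factor `Qb (fun i => σ (i + m)) (j + 1)` is `σ_{j+m} σ_{j+m-1} ⋯ σ_{m+1}`. -/
theorem BraidRelations_s6.Pb_succ_pow (h : BraidRelations_s6 σ n) {j m : ℕ} (hjm : j + m < n) :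
    Pb σ (j + m + 1) ^ j = Pb σ (j + m) ^ j * Qb (fun i => σ (i + m)) (j + 1) := by
  induction j generalizing m with
  | zero => simp only [pow_zero, Qb, mul_one]
  | succ j ih =>
    rw [add_right_comm j 1 m] at hjm ⊢
    have hshift : SemiconjBy (Pb σ (j + m + 2))
        (Qb (fun i => σ (i + m)) (j + 1)) (Qb (fun i => σ (i + (m + 1))) (j + 1)) :=
      semiconjBy_Qb fun i hi hij => h.semiconjBy_Pb_shift (by lia) (by lia) hjm
    have hQb : Qb (fun i => σ (i + m)) (j + 2) =
        σ (j + m + 1) * Qb (fun i => σ (i + m)) (j + 1) := by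
      rw [Qb, add_right_comm j 1 m]
    have hpow : Pb σ (j + m + 2) ^ j =
        Pb σ (j + m + 1) ^ j * Qb (fun i => σ (i + (m + 1))) (j + 1) := ih (m := m + 1) hjm
    calc Pb σ (j + m + 2) ^ (j + 1)
        = Pb σ (j + m + 1) ^ j *
            (Qb (fun i => σ (i + (m + 1))) (j + 1) * Pb σ (j + m + 2)) := by
          rw [pow_succ, hpow, mul_assoc]
      _ = Pb σ (j + m + 1) ^ j * (Pb σ (j + m + 2) * Qb (fun i => σ (i + m)) (j + 1)) := by
          rw [hshift.eq]
      _ = Pb σ (j + m + 1) ^ (j + 1) * Qb (fun i => σ (i + m)) (j + 2) := by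
          rw [hQb, Pb, pow_succ]
          simp only [mul_assoc]

theorem BraidRelations_s6.Pb_succ_pow_self (h : BraidRelations_s6 σ n) {k : ℕ} (hk : k < n) :
    Pb σ (k + 1) ^ k = Pb σ k ^ k * Qb σ (k + 1) :=
  h.Pb_succ_pow (m := 0) hk

end Braid

/-- For `1 ≤ k ≤ n`, the square of the torsion equals `P_k^k`. -/
theorem torsion_sq_eq_P_pow {G : Type*} [Group G] (n : ℕ) (hn : 1 ≤ n)
    (σ : ℕ → G)
    (hcomm : ∀ i j : ℕ, 1 ≤ i → i + 1 < j → j + 1 ≤ n → σ i * σ j = σ j * σ i)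
    (hbraid : ∀ i : ℕ, 1 ≤ i → i + 2 ≤ n →
      σ i * σ (i + 1) * σ i = σ (i + 1) * σ i * σ (i + 1))
    (k : ℕ) (hk1 : 1 ≤ k) (hk : k ≤ n) :
    Tb σ k * Tb σ k = (Pb σ k) ^ k := by
  have h : BraidRelations_s6 σ n := ⟨hcomm, hbraid⟩
  induction k, hk1 using Nat.le_induction with
  | base => simp only [Tb, Pb, Qb, mul_one, one_pow]
  | succ k _ ih =>
    calc Tb σ (k + 1) * Tb σ (k + 1)
        = Pb σ (k + 1) * Tb σ k * (Tb σ k * Qb σ (k + 1)) :=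
          congrArg (· * Tb σ (k + 1)) (h.farCommute.Tb_succ_eq_Pb_mul_Tb hk)
      _ = Pb σ (k + 1) * (Tb σ k * Tb σ k * Qb σ (k + 1)) := by simp only [mul_assoc]
      _ = Pb σ (k + 1) * Pb σ (k + 1) ^ k := by
          rw [ih (Nat.le_of_succ_le hk), h.Pb_succ_pow_self hk]
      _ = Pb σ (k + 1) ^ (k + 1) := (pow_succ' _ _).symm
end

section
/- In any group, if elements a and b satisfy aba = bab and abba = 1, then a⁴ = 1 and b⁴ = 1. -/
/-!
The braid relation says that `a * b` conjugates `a` to `b`, hence `a ^ n` to `b ^ n`. The relation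
`a * b ^ n * a = 1` makes `b ^ n` the square of `a⁻¹`, so `b ^ n` commutes with `a`, and therefore
with `a * b`; thus the conjugation fixes `b ^ n`, and `a ^ n = b ^ n`.
-/

theorem eq_of_semiconjBy_of_commute {S : Type*} [Mul S] {s x y : S} (hs : IsLeftRegular s)
    (hconj : SemiconjBy s x y) (hcomm : Commute s y) : x = y :=
  hs (hconj.eq.trans hcomm.eq.symm)

section Monoid

variable {M : Type*} [Monoid M] {a b c : M} {n : ℕ}

theorem commute_of_mul_mul_self_eq_one (h : a * c * a = 1) : Commute a c :=
  left_inv_eq_right_inv h (by rw [← mul_assoc, h])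

theorem isUnit_and_isUnit_of_mul_mul_self_eq_one (h : a * c * a = 1) : IsUnit a ∧ IsUnit c := by
  have hac : Commute a c := commute_of_mul_mul_self_eq_one h
  have hunit : IsUnit (a * c * a) := h ▸ isUnit_one
  have hunit_ac : IsUnit (a * c) :=
    (((Commute.refl a).mul_left hac.symm).isUnit_mul_iff.mp hunit).1
  exact hac.isUnit_mul_iff.mp hunit_ac

theorem fourth_power_eq_one_general (hn : n ≠ 0) (hbraid : a * b * a = b * a * b)
    (hone : a * b ^ n * a = 1) : a ^ (n + 2) = 1 ∧ b ^ (n + 2) = 1 := by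
  obtain ⟨ha, hbn⟩ := isUnit_and_isUnit_of_mul_mul_self_eq_one hone
  have hab : IsUnit (a * b) := ha.mul ((isUnit_pow_iff hn).mp hbn)
  have hconj : SemiconjBy (a * b) a b := hbraid.trans (mul_assoc b a b)
  have hcomm : Commute (a * b) (b ^ n) :=
    (commute_of_mul_mul_self_eq_one hone).mul_left (Commute.self_pow b n)
  have hpow : a ^ n = b ^ n :=
    eq_of_semiconjBy_of_commute hab.isRegular.left (hconj.pow_right n) hcomm
  have ha_pow : a ^ (n + 2) = 1 := by
    rw [← hone, ← hpow, ← pow_succ', ← pow_succ]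
  have hisConj : IsConj (a ^ (n + 2)) (b ^ (n + 2)) := ⟨hab.unit, hconj.pow_right (n + 2)⟩
  exact ⟨ha_pow, isConj_one_right.mp (ha_pow ▸ hisConj)⟩

end Monoid

/-- In any group, if `aba = bab` and `abba = 1`, then `a⁴ = 1` and `b⁴ = 1`. -/
theorem fourth_power_eq_one {H : Type*} [Group H] (a b : H)
    (h1 : a * b * a = b * a * b) (h2 : a * b * b * a = 1) :
    a ^ 4 = 1 ∧ b ^ 4 = 1 :=
  fourth_power_eq_one_general two_ne_zero h1 (by rwa [pow_two, ← mul_assoc])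
end

section
/- The group G presented by generators a, b with relations aba = bab and abba = 1 has exactly 12 elements. -/
/-- The relators `a b a b⁻¹ a⁻¹ b⁻¹` (i.e. `aba = bab`) and `a b b a` (i.e. `abba = 1`),
where `a` and `b` are the two generators of the free group on two generators. -/
def bbRels : Set (FreeGroup (Fin 2)) :=
  {FreeGroup.of 0 * FreeGroup.of 1 * FreeGroup.of 0 *
      (FreeGroup.of 1)⁻¹ * (FreeGroup.of 0)⁻¹ * (FreeGroup.of 1)⁻¹,
   FreeGroup.of 0 * FreeGroup.of 1 * FreeGroup.of 1 * FreeGroup.of 0}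

/-!
Put `x = ab` and `u = a`, so that `b = u⁻¹x`. The relation `abba = 1` says `(ab)⁻¹ = ba`, that is,
`u` conjugates `x` to its inverse; granted this, left multiplication by `a` turns `aba = bab` into
`u² = x³`. These are defining relations of the dicyclic group of order 12: they already imply
`x⁶ = 1`, because `u` both centralises and inverts `x³ = u²`.
-/

section

variable {G : Type*} [Group G] {n : ℕ} {x u : G}

theorem zpow_zmod_cast_intCast (h : x ^ n = 1) (k : ℤ) :
    x ^ ((k : ZMod n).cast : ℤ) = x ^ k := by
  rw [ZMod.coe_intCast, ← zpow_eq_zpow_emod' k h]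

theorem zpow_mul_eq_mul_zpow_neg (h : SemiconjBy u x⁻¹ x) (k : ℤ) :
    x ^ k * u = u * x ^ (-k) := by
  simpa only [inv_zpow'] using (h.zpow_right k).eq.symm

/-- The dicyclic relations on a pair `x, u` of group elements. Every such pair is the image of
the generators `a 1`, `xa 0` under a homomorphism from `QuaternionGroup n`. The relation
`x ^ (2 * n) = 1` of the usual presentation is not a field: see `pow_two_mul_eq_one`. -/
structure IsDicyclicPair (n : ℕ) (x u : G) : Prop where
  sq_eq_pow : u ^ 2 = x ^ n
  semiconjBy : SemiconjBy u x⁻¹ x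

namespace IsDicyclicPair

theorem pow_two_mul_eq_one (h : IsDicyclicPair n x u) : x ^ (2 * n) = 1 := by
  have inverts : SemiconjBy u (x ^ n)⁻¹ (x ^ n) := by
    simpa only [inv_pow] using h.semiconjBy.pow_right n
  have centralises : SemiconjBy u (x ^ n) (x ^ n) := h.sq_eq_pow ▸ Commute.self_pow u 2
  have inv_eq_self : (x ^ n)⁻¹ = x ^ n := mul_left_cancel (inverts.eq.trans centralises.eq.symm)
  rw [two_mul, pow_add, ← inv_eq_iff_mul_eq_one, inv_eq_self]

/-- The homomorphism from the dicyclic group that sends `a 1` to `x` and `xa 0` to `u`. -/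
def lift (h : IsDicyclicPair n x u) : QuaternionGroup n →* G :=
  MonoidHom.mk'
    (fun
      | .a i => x ^ (i.cast : ℤ)
      | .xa i => u * x ^ (i.cast : ℤ))
    (by
      have zpow_cast := zpow_zmod_cast_intCast h.pow_two_mul_eq_one
      have zpow_mul_u := zpow_mul_eq_mul_zpow_neg h.semiconjBy
      rintro (i | i) (j | j) <;>
        obtain ⟨k, rfl⟩ := ZMod.intCast_surjective i <;>
        obtain ⟨l, rfl⟩ := ZMod.intCast_surjective j
      · simp only [QuaternionGroup.a_mul_a, ← Int.cast_add, zpow_cast, zpow_add]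
      · simp only [QuaternionGroup.a_mul_xa, ← Int.cast_sub, zpow_cast]
        rw [← mul_assoc, zpow_mul_u, mul_assoc, ← zpow_add, neg_add_eq_sub]
      · simp only [QuaternionGroup.xa_mul_a, ← Int.cast_add, zpow_cast, zpow_add, mul_assoc]
      · simp only [QuaternionGroup.xa_mul_xa, ← Int.cast_natCast (R := ZMod (2 * n)) n,
          ← Int.cast_add, ← Int.cast_sub, zpow_cast]
        calc x ^ ((n : ℤ) + l - k) = u ^ 2 * x ^ (-k + l) := by
              rw [h.sq_eq_pow, ← zpow_natCast, ← zpow_add, add_sub_assoc, neg_add_eq_sub]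
          _ = u * (u * x ^ (-k)) * x ^ l := by rw [zpow_add, sq]; simp only [mul_assoc]
          _ = u * x ^ k * (u * x ^ l) := by rw [← zpow_mul_u]; simp only [mul_assoc])

theorem lift_a_one (h : IsDicyclicPair n x u) : h.lift (.a 1) = x := by
  have lift_a_intCast : h.lift (.a (1 : ℤ)) = x ^ (1 : ℤ) :=
    zpow_zmod_cast_intCast h.pow_two_mul_eq_one 1
  simpa only [Int.cast_one, zpow_one] using lift_a_intCast

theorem lift_xa_zero (h : IsDicyclicPair n x u) : h.lift (.xa 0) = u := by
  have lift_xa_intCast : h.lift (.xa (0 : ℤ)) = u * x ^ (0 : ℤ) :=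
    congrArg (u * ·) (zpow_zmod_cast_intCast h.pow_two_mul_eq_one 0)
  simpa only [Int.cast_zero, zpow_zero, mul_one] using lift_xa_intCast

end IsDicyclicPair

theorem isDicyclicPair_a_one_xa_zero (n : ℕ) :
    IsDicyclicPair n (.a 1 : QuaternionGroup n) (.xa 0) where
  sq_eq_pow := by rw [QuaternionGroup.xa_sq, QuaternionGroup.a_one_pow]
  semiconjBy := by
    rw [SemiconjBy, mul_inv_eq_iff_eq_mul]
    simp

theorem quaternionGroup_a_one_zpow (k : ℤ) : (.a 1 : QuaternionGroup n) ^ k = .a k := by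
  obtain ⟨m, rfl | rfl⟩ := k.eq_nat_or_neg
  · rw [zpow_natCast, QuaternionGroup.a_one_pow, Int.cast_natCast]
  · rw [zpow_neg, zpow_natCast, QuaternionGroup.a_one_pow, inv_eq_iff_mul_eq_one,
      QuaternionGroup.a_mul_a, Int.cast_neg, Int.cast_natCast, add_neg_cancel,
      QuaternionGroup.a_zero]

theorem quaternionGroup_hom_ext {f g : QuaternionGroup n →* G}
    (h_a : f (.a 1) = g (.a 1)) (h_xa : f (.xa 0) = g (.xa 0)) : f = g := by
  have eq_on_a (i : ZMod (2 * n)) : f (.a i) = g (.a i) := by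
    obtain ⟨k, rfl⟩ := ZMod.intCast_surjective i
    rw [← quaternionGroup_a_one_zpow, map_zpow, map_zpow, h_a]
  ext (i | i)
  · exact eq_on_a i
  · rw [← zero_add i, ← QuaternionGroup.xa_mul_a, map_mul, map_mul, h_xa, eq_on_a]

theorem braid_and_mul_eq_one_iff_isDicyclicPair {a b : G} :
    (a * b * a = b * a * b ∧ a * b * b * a = 1) ↔ IsDicyclicPair 3 (a * b) a := by
  have semiconj_iff : a * b * b * a = 1 ↔ SemiconjBy a (a * b)⁻¹ (a * b) := by
    rw [SemiconjBy, mul_assoc a b a, mul_right_inj, inv_eq_iff_mul_eq_one, ← mul_assoc]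
  have sq_iff (h : a * b * b * a = 1) : a * b * a = b * a * b ↔ a ^ 2 = (a * b) ^ 3 := by
    have inv_eq : (a * b)⁻¹ = b * a := inv_eq_of_mul_eq_one_right (by rw [← mul_assoc, h])
    calc a * b * a = b * a * b ↔ a * (a * (b * a)) = a * (b * a * b) := by
          rw [mul_right_inj, mul_assoc]
      _ ↔ a ^ 2 * (a * b)⁻¹ = (a * b) ^ 2 := by
          rw [inv_eq]; simp only [sq, mul_assoc]
      _ ↔ a ^ 2 = (a * b) ^ 3 := by rw [mul_inv_eq_iff_eq_mul, ← pow_succ]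
  constructor
  · rintro ⟨braid, h⟩
    exact ⟨(sq_iff h).1 braid, semiconj_iff.1 h⟩
  · rintro ⟨hsq, hsemi⟩
    have h := semiconj_iff.2 hsemi
    exact ⟨(sq_iff h).2 hsq, h⟩

theorem lift_bbRels_eq_one_iff {f : Fin 2 → G} :
    (∀ r ∈ bbRels, FreeGroup.lift f r = 1) ↔ IsDicyclicPair 3 (f 0 * f 1) (f 0) := by
  rw [← braid_and_mul_eq_one_iff_isDicyclicPair]
  simp only [bbRels, Set.forall_mem_insert, Set.mem_singleton_iff, forall_eq, map_mul, map_inv,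
    FreeGroup.lift_apply_of, mul_inv_eq_iff_eq_mul, one_mul]

end

theorem isDicyclicPair_presentedGroup_of :
    IsDicyclicPair 3 (.of 0 * .of 1 : PresentedGroup bbRels) (.of 0) := by
  have lift_of : FreeGroup.lift PresentedGroup.of = PresentedGroup.mk bbRels := by
    ext i
    exact FreeGroup.lift_apply_of
  refine lift_bbRels_eq_one_iff.1 fun r hr ↦ ?_
  rw [lift_of, PresentedGroup.one_of_mem hr]

theorem lift_bbRels_quaternionGroup_eq_one :
    ∀ r ∈ bbRels, FreeGroup.lift ![.xa 0, (.xa 0 : QuaternionGroup 3)⁻¹ * .a 1] r = 1 :=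
  lift_bbRels_eq_one_iff.2 <| by
    simpa using isDicyclicPair_a_one_xa_zero 3

/-- The isomorphism with the dicyclic group of order 12 that identifies `of 0` with `xa 0` and
`of 0 * of 1` with `a 1`. -/
def presentedGroupEquivQuaternionGroup : PresentedGroup bbRels ≃* QuaternionGroup 3 :=
  MonoidHom.toMulEquiv (PresentedGroup.toGroup lift_bbRels_quaternionGroup_eq_one)
    isDicyclicPair_presentedGroup_of.lift
    (by
      ext i
      fin_cases i <;> simp [IsDicyclicPair.lift_a_one, IsDicyclicPair.lift_xa_zero])
    (by
      apply quaternionGroup_hom_ext <;>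
        simp [IsDicyclicPair.lift_a_one, IsDicyclicPair.lift_xa_zero])

/-- The group presented by generators `a, b` with relations `aba = bab` and
`abba = 1` has exactly 12 elements. -/
theorem presented_card_eq_twelve : Nat.card (PresentedGroup bbRels) = 12 := by
  rw [Nat.card_congr presentedGroupEquivQuaternionGroup.toEquiv, Nat.card_eq_fintype_card,
    QuaternionGroup.card]
end

section
/- In the group G presented by generators a, b with relations aba = bab and abba = 1, the cyclic subgroup generated by c = ab⁻¹ is a normal subgroup of order 3. -/
/-!
The two relations together force `a² = b²`, and this alone makes both generators conjugate
`c = ab⁻¹` to its inverse, so `⟨c⟩` is normal. Writing `b = ac = c⁻¹a` turns `aba = bab` into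
`ac⁻¹a² = ac²a²`, that is `c³ = 1`. Finally `c ≠ 1`, because sending `a` and `b` to two
different transpositions of three letters respects the relations.
-/

section Group

variable {G : Type*} [Group G]

theorem mem_normalizer_zpowers_of_semiconjBy_inv {g c : G} (h : SemiconjBy g c c⁻¹) :
    g ∈ Subgroup.normalizer (Subgroup.zpowers c : Set G) := by
  have hconj : MulAut.conj g c = c⁻¹ := mul_inv_eq_of_eq_mul h
  rw [Subgroup.mem_normalizer_iff_map_conj_eq, MonoidHom.map_zpowers, MonoidHom.coe_coe, hconj,
    Subgroup.zpowers_inv]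

variable {a b : G}

theorem mul_self_eq_mul_self_of_braid (hbraid : a * b * a = b * a * b)
    (habba : a * b * b * a = 1) : a * a = b * b := by
  have hbaab : b * a * a * b = 1 := by
    calc b * a * a * b = (a * b)⁻¹ * (a * b * b * a) * (a * b) := by group
      _ = 1 := by rw [habba]; group
  calc a * a = a * (b * a * a * b) * a := by rw [hbaab, mul_one]
    _ = (a * b * a) * (a * b * a) := by group
    _ = (b * a * b) * (b * a * b) := by rw [hbraid]
    _ = b * (a * b * b * a) * b := by group
    _ = b * b := by rw [habba, mul_one]

theorem semiconjBy_left_mul_inv_of_mul_self_eq (hsq : a * a = b * b) :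
    SemiconjBy a (a * b⁻¹) (a * b⁻¹)⁻¹ :=
  calc a * (a * b⁻¹) = a * a * b⁻¹ := (mul_assoc ..).symm
    _ = b * b * b⁻¹ := by rw [hsq]
    _ = (a * b⁻¹)⁻¹ * a := by group

theorem semiconjBy_right_mul_inv_of_mul_self_eq (hsq : a * a = b * b) :
    SemiconjBy b (a * b⁻¹) (a * b⁻¹)⁻¹ := by
  simpa using (semiconjBy_left_mul_inv_of_mul_self_eq hsq.symm).inv_right

theorem mul_inv_pow_three_eq_one_of_braid (hbraid : a * b * a = b * a * b)
    (hsq : a * a = b * b) : (a * b⁻¹) ^ 3 = 1 := by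
  have hac := semiconjBy_left_mul_inv_of_mul_self_eq hsq
  set c := a * b⁻¹ with hc
  have hb : b = c⁻¹ * a := by rw [hc]; group
  have hca : a * c⁻¹ = c * a := by simpa using hac.inv_right.eq
  have hcancel : a * c ^ 2 * (a * a) = a * c⁻¹ * (a * a) :=
    calc a * c ^ 2 * (a * a) = a * c * (c * a) * a := by simp only [pow_two, mul_assoc]
      _ = (a * c) * a * (c⁻¹ * a) := by rw [← hca]; group
      _ = b * a * b := by rw [hac.eq, ← hb]
      _ = a * b * a := hbraid.symm
      _ = a * c⁻¹ * (a * a) := by rw [hb]; group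
  have hc2 : c ^ 2 = c⁻¹ := mul_left_cancel (mul_right_cancel hcancel)
  rw [pow_succ, hc2, inv_mul_cancel]

theorem orderOf_mul_inv_eq_three_of_braid (hbraid : a * b * a = b * a * b)
    (hsq : a * a = b * b) (hne : a ≠ b) : orderOf (a * b⁻¹) = 3 :=
  orderOf_eq_prime (mul_inv_pow_three_eq_one_of_braid hbraid hsq)
    (mt mul_inv_eq_one.mp hne)

end Group

namespace bbRels

open PresentedGroup

theorem of_braid :
    (of 0 * of 1 * of 0 : PresentedGroup bbRels) = of 1 * of 0 * of 1 := by
  rw [← mul_inv_eq_one]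
  simp only [mul_inv_rev, ← mul_assoc]
  exact one_of_mem (rels := bbRels) (Set.mem_insert _ _)

theorem of_mul_of_mul_of_mul_of_eq_one :
    (of 0 * of 1 * of 1 * of 0 : PresentedGroup bbRels) = 1 :=
  one_of_mem (rels := bbRels) (Set.mem_insert_of_mem _ rfl)

theorem of_mul_self_eq : (of 0 * of 0 : PresentedGroup bbRels) = of 1 * of 1 :=
  mul_self_eq_mul_self_of_braid of_braid of_mul_of_mul_of_mul_of_eq_one

theorem lift_swap_eq_one {r : FreeGroup (Fin 2)} (hr : r ∈ bbRels) :
    FreeGroup.lift ![Equiv.swap (0 : Fin 3) 1, Equiv.swap 1 2] r = 1 := by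
  rcases hr with rfl | rfl <;>
    simp only [map_mul, map_inv, FreeGroup.lift_apply_of] <;> decide

theorem of_zero_ne_of_one : (of 0 : PresentedGroup bbRels) ≠ of 1 := by
  intro h
  have hswap : Equiv.swap (0 : Fin 3) 1 = Equiv.swap 1 2 := by
    simpa using congrArg (toGroup fun _ ↦ lift_swap_eq_one) h
  exact absurd hswap (by decide)

end bbRels

/-- In the group presented by generators `a, b` with relations `aba = bab` and
`abba = 1`, the cyclic subgroup generated by `c = ab⁻¹` is a normal subgroup of
order 3. -/
theorem zpowers_c_normal_card_three :
    (Subgroup.zpowers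
        (PresentedGroup.of (rels := bbRels) 0 * (PresentedGroup.of (rels := bbRels) 1)⁻¹)).Normal ∧
      Nat.card
        (Subgroup.zpowers
          (PresentedGroup.of (rels := bbRels) 0 * (PresentedGroup.of (rels := bbRels) 1)⁻¹)) = 3 := by
  have hsq := bbRels.of_mul_self_eq
  constructor
  · rw [← Subgroup.normalizer_eq_top_iff, Subgroup.eq_top_iff']
    refine PresentedGroup.generated_by bbRels _ fun i ↦
      mem_normalizer_zpowers_of_semiconjBy_inv ?_
    fin_cases i
    · exact semiconjBy_left_mul_inv_of_mul_self_eq hsq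
    · exact semiconjBy_right_mul_inv_of_mul_self_eq hsq
  · rw [Nat.card_zpowers]
    exact orderOf_mul_inv_eq_three_of_braid bbRels.of_braid hsq bbRels.of_zero_ne_of_one
end

section
/- Define sequences (u_k), (v_k) in SL₂(ℤ) by u₀ = x, v₀ = y, u_{k+1} = u_k v_k u_k⁻¹, v_{k+1} = u_k. Then for every k ≥ 0, the maximum of the absolute values of the four entries of u_{k+1} is strictly greater than the maximum of the absolute values of the four entries of u_k. -/
/-- The pair sequence `(u_k, v_k)` in `SL₂(ℤ)`: `u₀ = x = [[1,1],[0,1]]`,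
`v₀ = y = [[1,0],[1,1]]`, `u_{k+1} = u_k v_k u_k⁻¹`, `v_{k+1} = u_k`. -/
def uvSeq : ℕ → Matrix.SpecialLinearGroup (Fin 2) ℤ × Matrix.SpecialLinearGroup (Fin 2) ℤ
  | 0 => (⟨!![1, 1; 0, 1], by norm_num [Matrix.det_fin_two_of]⟩,
          ⟨!![1, 0; 1, 1], by norm_num [Matrix.det_fin_two_of]⟩)
  | (k+1) => ((uvSeq k).1 * (uvSeq k).2 * (uvSeq k).1⁻¹, (uvSeq k).1)

/-- The maximum of the absolute values of the four entries of a matrix in `SL₂(ℤ)`. -/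
def maxEntry (g : Matrix.SpecialLinearGroup (Fin 2) ℤ) : ℤ :=
  max (max |(g : Matrix (Fin 2) (Fin 2) ℤ) 0 0| |(g : Matrix (Fin 2) (Fin 2) ℤ) 0 1|)
      (max |(g : Matrix (Fin 2) (Fin 2) ℤ) 1 0| |(g : Matrix (Fin 2) (Fin 2) ℤ) 1 1|)

/-!
The map `z ↦ z + c * det (w, z) • w` of the plane is an element of `SL₂` fixing `w`. Conjugating
such a map by `g` replaces `w` by `g • w` and leaves `c` unchanged. The matrices `u_k` and `v_k`
have this form for `w = (F_{k+1}, F_k)`, `c = (-1) ^ k` and `w = (F_k, F_{k-1})`, `c = -(-1) ^ k`: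
by Cassini's identity, `u_k` sends the second vector to the sum of the two, which is
`(F_{k+2}, F_{k+1})`. Hence the largest entry of `u_k` lies between `F_{k+1} ^ 2` and
`F_{k+1} ^ 2 + 1`, and `F_{k+1} ^ 2 + 1 < F_{k+2} ^ 2` as soon as `k ≥ 1`; for `k = 0` the
maximal entries are `1` and `2`.
-/

open Matrix

section Transvection

variable {R : Type*} [CommRing R]

/-- The symplectic transvection `z ↦ z + c * det (w, z) • w` of the plane, written as a matrix. -/
def symplecticTransvection (c : R) (w : Fin 2 → R) : SpecialLinearGroup (Fin 2) R :=
  ⟨!![1 - c * (w 0 * w 1), c * w 0 ^ 2; -(c * w 1 ^ 2), 1 + c * (w 0 * w 1)], by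
    rw [det_fin_two_of]
    ring⟩

lemma coe_symplecticTransvection (c : R) (w : Fin 2 → R) :
    (symplecticTransvection c w : Matrix (Fin 2) (Fin 2) R) =
      !![1 - c * (w 0 * w 1), c * w 0 ^ 2; -(c * w 1 ^ 2), 1 + c * (w 0 * w 1)] :=
  rfl

lemma symplecticTransvection_smul (c : R) (w z : Fin 2 → R) :
    symplecticTransvection c w • z = z + (c * (w 0 * z 1 - w 1 * z 0)) • w := by
  rw [Matrix.SpecialLinearGroup.smul_def, coe_symplecticTransvection, smul_eq_mulVec]
  ext i
  fin_cases i <;>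
    simp only [mulVec_fin_two, of_apply, cons_val', cons_val, Pi.add_apply, Pi.smul_apply,
      smul_eq_mul, Fin.zero_eta, Fin.mk_one] <;>
    ring

lemma mul_symplecticTransvection_mul_inv (g : SpecialLinearGroup (Fin 2) R) (c : R)
    (w : Fin 2 → R) :
    g * symplecticTransvection c w * g⁻¹ = symplecticTransvection c (g • w) := by
  have hdet : g 0 0 * g 1 1 - g 0 1 * g 1 0 = 1 := by rw [← det_fin_two, g.det_coe]
  rw [mul_inv_eq_iff_eq_mul, Matrix.SpecialLinearGroup.smul_def, smul_eq_mulVec]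
  ext i j
  fin_cases i <;> fin_cases j <;>
    simp only [Matrix.SpecialLinearGroup.coe_mul, coe_symplecticTransvection, mul_apply,
      Fin.sum_univ_two, mulVec_fin_two, of_apply, cons_val', cons_val, Fin.zero_eta, Fin.mk_one]
  · linear_combination c * (g 0 0 * w 0 + g 0 1 * w 1) * w 1 * hdet
  · linear_combination -c * (g 0 0 * w 0 + g 0 1 * w 1) * w 0 * hdet
  · linear_combination c * (g 1 0 * w 0 + g 1 1 * w 1) * w 1 * hdet
  · linear_combination -c * (g 1 0 * w 0 + g 1 1 * w 1) * w 0 * hdet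

end Transvection

lemma maxEntry_le_iff {g : SpecialLinearGroup (Fin 2) ℤ} {m : ℤ} :
    maxEntry g ≤ m ↔ ∀ i j, |g i j| ≤ m := by
  simp [maxEntry, Fin.forall_fin_two, and_assoc]

lemma abs_apply_le_maxEntry (g : SpecialLinearGroup (Fin 2) ℤ) (i j : Fin 2) :
    |g i j| ≤ maxEntry g :=
  maxEntry_le_iff.1 le_rfl i j

lemma abs_mul_sq_le_maxEntry_symplecticTransvection (c : ℤ) (w : Fin 2 → ℤ) :
    |c| * w 0 ^ 2 ≤ maxEntry (symplecticTransvection c w) := by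
  simpa [coe_symplecticTransvection, abs_mul] using
    abs_apply_le_maxEntry (symplecticTransvection c w) 0 1

lemma maxEntry_symplecticTransvection_le (c : ℤ) {w : Fin 2 → ℤ} (hw : |w 1| ≤ |w 0|) :
    maxEntry (symplecticTransvection c w) ≤ 1 + |c| * w 0 ^ 2 := by
  have h_sq : |c * w 1 ^ 2| ≤ |c| * w 0 ^ 2 := by
    rw [abs_mul, abs_sq]
    gcongr |c| * ?_
    exact sq_le_sq.2 hw
  have h_mul : |c * (w 0 * w 1)| ≤ |c| * w 0 ^ 2 := by
    rw [abs_mul, abs_mul, ← sq_abs (w 0), sq]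
    gcongr
  rw [maxEntry_le_iff]
  intro i j
  fin_cases i <;> fin_cases j
  · calc |1 - c * (w 0 * w 1)| ≤ |1| + |c * (w 0 * w 1)| := abs_sub _ _
      _ ≤ 1 + |c| * w 0 ^ 2 := by simpa using h_mul
  · calc |c * w 0 ^ 2| = |c| * w 0 ^ 2 := by rw [abs_mul, abs_sq]
      _ ≤ 1 + |c| * w 0 ^ 2 := by simp
  · calc |-(c * w 1 ^ 2)| = |c * w 1 ^ 2| := abs_neg _
      _ ≤ 1 + |c| * w 0 ^ 2 := h_sq.trans (by simp)
  · calc |1 + c * (w 0 * w 1)| ≤ |1| + |c * (w 0 * w 1)| := abs_add_le _ _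
      _ ≤ 1 + |c| * w 0 ^ 2 := by simpa using h_mul

/-- The vector `(F_{n+1}, F_n)` of consecutive Fibonacci numbers. The index ranges over `ℤ` since
`v₀` corresponds to `(F_0, F_{-1}) = (0, 1)`. -/
def fibVec (n : ℤ) : Fin 2 → ℤ :=
  ![Int.fib (n + 1), Int.fib n]

lemma fibVec_natCast_zero (k : ℕ) : fibVec k 0 = Nat.fib (k + 1) :=
  rfl

lemma fibVec_natCast_one (k : ℕ) : fibVec k 1 = Nat.fib k :=
  rfl

lemma fibVec_sub_one_add_fibVec (n : ℤ) : fibVec (n - 1) + fibVec n = fibVec (n + 1) := by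
  ext i
  fin_cases i <;>
    simp only [fibVec, sub_add_cancel, Fin.zero_eta, Fin.mk_one, Pi.add_apply, cons_val] <;>
    grind [Int.fib_add_two]

lemma symplecticTransvection_fibVec_smul_fibVec_sub_one (n : ℕ) :
    symplecticTransvection ((-1) ^ n) (fibVec n) • fibVec (n - 1) = fibVec (n + 1) := by
  have cassini : fibVec n 0 * fibVec (n - 1) 1 - fibVec n 1 * fibVec (n - 1) 0 = (-1) ^ n := by
    simpa [fibVec, sq] using Int.fib_succ_mul_fib_pred_sub_fib_sq n
  rw [symplecticTransvection_smul, cassini, pow_mul_pow_eq_one n (by norm_num), one_smul,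
    fibVec_sub_one_add_fibVec]

theorem uvSeq_eq_symplecticTransvection (k : ℕ) :
    uvSeq k = (symplecticTransvection ((-1) ^ k) (fibVec k),
      symplecticTransvection (-(-1) ^ k) (fibVec (k - 1))) := by
  induction k with
  | zero => simp [uvSeq, symplecticTransvection, fibVec]
  | succ k ih =>
    rw [uvSeq, ih, mul_symplecticTransvection_mul_inv,
      symplecticTransvection_fibVec_smul_fibVec_sub_one]
    simp [pow_succ]

lemma fib_sq_le_maxEntry_uvSeq (k : ℕ) :
    (Nat.fib (k + 1) : ℤ) ^ 2 ≤ maxEntry (uvSeq k).1 := by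
  simpa [uvSeq_eq_symplecticTransvection, fibVec_natCast_zero] using
    abs_mul_sq_le_maxEntry_symplecticTransvection ((-1) ^ k) (fibVec k)

lemma maxEntry_uvSeq_le (k : ℕ) :
    maxEntry (uvSeq k).1 ≤ 1 + (Nat.fib (k + 1) : ℤ) ^ 2 := by
  have hw : |fibVec k 1| ≤ |fibVec k 0| := by
    simpa [fibVec_natCast_zero, fibVec_natCast_one] using Nat.fib_le_fib_succ
  simpa [uvSeq_eq_symplecticTransvection, fibVec_natCast_zero] using
    maxEntry_symplecticTransvection_le ((-1) ^ k) hw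

lemma one_add_fib_sq_lt_fib_succ_sq {n : ℕ} (hn : 2 ≤ n) :
    1 + Nat.fib n ^ 2 < Nat.fib (n + 1) ^ 2 := by
  have h_pos : 0 < Nat.fib n := Nat.fib_pos.2 (by lia)
  have h_lt : Nat.fib n < Nat.fib (n + 1) := Nat.fib_lt_fib_succ hn
  nlinarith

/-- The maximum absolute value of the entries of `u_k` is strictly increasing in `k`. -/
theorem maxEntry_strict_mono : ∀ k : ℕ, maxEntry (uvSeq k).1 < maxEntry (uvSeq (k + 1)).1 := by
  rintro (_ | k)
  · decide
  · calc
      maxEntry (uvSeq (k + 1)).1 ≤ 1 + (Nat.fib (k + 2) : ℤ) ^ 2 := maxEntry_uvSeq_le (k + 1)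
      _ < (Nat.fib (k + 3) : ℤ) ^ 2 := mod_cast one_add_fib_sq_lt_fib_succ_sq (by lia)
      _ ≤ maxEntry (uvSeq (k + 2)).1 := fib_sq_le_maxEntry_uvSeq (k + 2)
end

section
/- Define sequences (u_k), (v_k) in SL₂(ℤ) by u₀ = x, v₀ = y, u_{k+1} = u_k v_k u_k⁻¹, v_{k+1} = u_k. Then the map k ↦ (u_k, v_k) is injective; that is, the pairs (u_k, v_k) for k = 0, 1, 2, … are pairwise distinct. -/
/-!
The map `σ (u, v) = (u v u⁻¹, u)` on pairs in a group preserves the product `c = u v`, and `σ²` is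
simultaneous conjugation by `c`. As `σ` is injective, its orbit of `(u, v)` repeats only if
`(u, v)` is periodic, hence only if some `cⁿ` with `n > 0` commutes with `u`. For `u = x` and
`v = y` every such `cⁿ` has positive entries, whereas a matrix commuting with `x` has lower-left
entry `0`.
-/

open Function Matrix

theorem injective_iterate_iff_notMem_periodicPts {α : Type*} {f : α → α} (hf : Injective f)
    {a : α} : Injective (fun n => f^[n] a) ↔ a ∉ periodicPts f := by
  refine ⟨fun h ⟨n, hn, hna⟩ => hn.ne' (h hna), fun ha => ?_⟩
  refine .of_lt_imp_ne fun m n hmn heq => ha ?_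
  exact mk_mem_periodicPts (Nat.sub_pos_of_lt hmn) (iterate_cancel hf heq.symm)

section HurwitzMove

variable {G : Type*} [Group G]

/-- The Hurwitz move on pairs in a group: the action of the generator of the braid group on two
strands by `(u, v) ↦ (u v u⁻¹, u)`. -/
def hurwitzMove (p : G × G) : G × G :=
  (p.1 * p.2 * p.1⁻¹, p.1)

theorem hurwitzMove_injective : Injective (hurwitzMove (G := G)) := by
  rintro ⟨u, v⟩ ⟨u', v'⟩ h
  obtain ⟨hconj, rfl⟩ := Prod.mk.inj h
  simpa using hconj

theorem hurwitzMove_fst_mul_snd (p : G × G) :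
    (hurwitzMove p).1 * (hurwitzMove p).2 = p.1 * p.2 :=
  inv_mul_cancel_right _ _

theorem hurwitzMove_iterate_fst_mul_snd (n : ℕ) (p : G × G) :
    (hurwitzMove^[n] p).1 * (hurwitzMove^[n] p).2 = p.1 * p.2 := by
  induction n with
  | zero => rfl
  | succ n ih => rw [iterate_succ_apply', hurwitzMove_fst_mul_snd, ih]

theorem hurwitzMove_hurwitzMove (p : G × G) :
    hurwitzMove (hurwitzMove p) = ConjAct.toConjAct (p.1 * p.2) • p := by
  ext <;> simp only [hurwitzMove, Prod.smul_fst, Prod.smul_snd, ConjAct.toConjAct_smul] <;> group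

theorem hurwitzMove_iterate_two_mul (n : ℕ) (p : G × G) :
    hurwitzMove^[2 * n] p = ConjAct.toConjAct ((p.1 * p.2) ^ n) • p := by
  induction n with
  | zero => simp
  | succ n ih =>
    calc hurwitzMove^[2 * (n + 1)] p
        = hurwitzMove (hurwitzMove (hurwitzMove^[2 * n] p)) := by
          rw [mul_add_one, iterate_succ_apply', iterate_succ_apply']
      _ = ConjAct.toConjAct (p.1 * p.2) • hurwitzMove^[2 * n] p := by
          rw [hurwitzMove_hurwitzMove, hurwitzMove_iterate_fst_mul_snd]
      _ = ConjAct.toConjAct ((p.1 * p.2) ^ (n + 1)) • p := by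
          rw [ih, smul_smul, ← map_mul, ← pow_succ']

theorem toConjAct_smul_eq_iff_commute {g h : G} :
    ConjAct.toConjAct g • h = h ↔ Commute g h := by
  rw [ConjAct.toConjAct_smul, mul_inv_eq_iff_eq_mul, commute_iff_eq]

theorem isPeriodicPt_hurwitzMove_two_mul_iff {n : ℕ} {p : G × G} :
    IsPeriodicPt hurwitzMove (2 * n) p ↔ Commute ((p.1 * p.2) ^ n) p.1 := by
  have commute_snd (h : Commute ((p.1 * p.2) ^ n) p.1) : Commute ((p.1 * p.2) ^ n) p.2 := by
    simpa using h.inv_right.mul_right (Commute.pow_self (p.1 * p.2) n)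
  rw [IsPeriodicPt, IsFixedPt, hurwitzMove_iterate_two_mul, Prod.ext_iff, Prod.smul_fst,
    Prod.smul_snd, toConjAct_smul_eq_iff_commute, toConjAct_smul_eq_iff_commute]
  exact and_iff_left_of_imp commute_snd

theorem mem_periodicPts_hurwitzMove_iff {p : G × G} :
    p ∈ periodicPts hurwitzMove ↔ ∃ n > 0, Commute ((p.1 * p.2) ^ n) p.1 := by
  constructor
  · rintro ⟨n, hn, hp⟩
    exact ⟨n, hn, isPeriodicPt_hurwitzMove_two_mul_iff.mp (hp.const_mul 2)⟩
  · rintro ⟨n, hn, hcomm⟩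
    exact mk_mem_periodicPts (by positivity) (isPeriodicPt_hurwitzMove_two_mul_iff.mpr hcomm)

theorem injective_hurwitzMove_iterate_iff {p : G × G} :
    Injective (fun n => hurwitzMove^[n] p) ↔ ∀ n > 0, ¬ Commute ((p.1 * p.2) ^ n) p.1 := by
  simp only [injective_iterate_iff_notMem_periodicPts hurwitzMove_injective,
    mem_periodicPts_hurwitzMove_iff, not_exists, not_and]

end HurwitzMove

section Matrix

variable {n R : Type*} [Fintype n] [DecidableEq n]

theorem pow_apply_pos_of_forall_pos [Semiring R] [PartialOrder R] [IsStrictOrderedRing R]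
    {A : Matrix n n R} (hA : ∀ i j, 0 < A i j) {k : ℕ} (hk : 0 < k) (i j : n) :
    0 < (A ^ k) i j := by
  induction k, hk using Nat.le_induction generalizing i j with
  | base => simpa using hA i j
  | succ k _ ih =>
    rw [pow_succ, mul_apply]
    exact Finset.sum_pos (fun l _ => mul_pos (ih i l) (hA l j)) ⟨i, Finset.mem_univ i⟩

theorem row_eq_zero_of_commute_transvection [CommRing R] {i j k : n} {M : Matrix n n R}
    (hM : Commute (transvection i j 1) M) (hkj : k ≠ j) : M j k = 0 := by
  refine row_eq_zero_of_commute_single (i := i) ?_ hkj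
  simpa only [transvection, add_sub_cancel_left] using hM.sub_left (Commute.one_left M)

end Matrix

theorem uvSeq_eq_hurwitzMove_iterate (k : ℕ) : uvSeq k = hurwitzMove^[k] (uvSeq 0) := by
  induction k with
  | zero => rfl
  | succ k ih => rw [iterate_succ_apply', ← ih, uvSeq, hurwitzMove]

theorem uvSeq_zero_fst_eq_transvection : ((uvSeq 0).1 : Matrix (Fin 2) (Fin 2) ℤ) =
    transvection 0 1 1 := by
  decide

theorem uvSeq_zero_fst_mul_snd : (((uvSeq 0).1 * (uvSeq 0).2 :
    SpecialLinearGroup (Fin 2) ℤ) : Matrix (Fin 2) (Fin 2) ℤ) = !![2, 1; 1, 1] := by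
  decide

theorem not_commute_uvSeq_zero_pow {n : ℕ} (hn : 0 < n) :
    ¬ Commute (((uvSeq 0).1 * (uvSeq 0).2) ^ n) (uvSeq 0).1 := by
  intro hcomm
  have hpos : 0 < ((!![2, 1; 1, 1] : Matrix (Fin 2) (Fin 2) ℤ) ^ n) 1 0 :=
    pow_apply_pos_of_forall_pos (by simp [Fin.forall_fin_two]) hn 1 0
  have hcomm' : Commute (transvection 0 1 1) ((!![2, 1; 1, 1] : Matrix (Fin 2) (Fin 2) ℤ) ^ n) := by
    rw [← uvSeq_zero_fst_eq_transvection, ← uvSeq_zero_fst_mul_snd]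
    exact hcomm.symm.map SpecialLinearGroup.coeMonoidHom
  exact hpos.ne' (row_eq_zero_of_commute_transvection hcomm' zero_ne_one)

/-- The pairs `(u_k, v_k)` are pairwise distinct: `k ↦ (u_k, v_k)` is injective. -/
theorem uvSeq_injective : Function.Injective uvSeq := by
  rw [funext uvSeq_eq_hurwitzMove_iterate, injective_hurwitzMove_iterate_iff]
  exact fun _ => not_commute_uvSeq_zero_pow
end
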